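/- Three colours are sometimes necessary to subset square colour a caterpillar: let G be the tree obtained from a path v_1, v_2, …, v_k with k ≥ 3 by attaching, for each i, at least 3 pendant leaves to v_i (so each v_i has at least 3 neighbours of degree one). Then χ_ssc(G) ≥ 3, and combined with the upper bound for caterpillars, χ_ssc(G) = 3. -/

import Mathlib

open SimpleGraph

/-- The closed neighbourhood of `v` in `G`. -/
def closedNbhd {V : Type*} (G : SimpleGraph V) (v : V) : Set V :=
  {u | u = v ∨ G.Adj v u}

/-- `c` is a `q`-subset square colouring of `G`: colours `1, …, q` are real colours and
colour `0` means "uncoloured"; every closed neighbourhood contains a coloured vertex, and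
no nonzero colour appears on two distinct vertices of a closed neighbourhood. -/
def IsSubsetSquareColouring {V : Type*} (G : SimpleGraph V) (q : ℕ) (c : V → ℕ) : Prop :=
  (∀ v, c v ≤ q) ∧
  (∀ v, ∃ u ∈ closedNbhd G v, c u ≠ 0) ∧
  (∀ v i, 1 ≤ i → i ≤ q →
    ∀ u ∈ closedNbhd G v, ∀ w ∈ closedNbhd G v, c u = i → c w = i → u = w)

/-- The subset square chromatic number `χ_ssc G`. -/
noncomputable def sscNum {V : Type*} (G : SimpleGraph V) : ℕ :=
  sInf {q | ∃ c : V → ℕ, IsSubsetSquareColouring G q c}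

/-!
Fewer than `n` colours cannot serve `n` pendant leaves of an uncoloured vertex `z`: each leaf
would have to be coloured itself, and all of them lie in `N[z]`. So if every vertex of a set
`S ⊆ N[v]` has at least `|S|` leaves, then either `S` is entirely coloured or some vertex of `S`
is uncoloured, and at least `|S|` colours are needed in both cases. Apply this to three
consecutive spine vertices. Conversely, a spine that is a geodesic can be coloured periodically
`1, 2, 3`, because two of its vertices within one closed neighbourhood have positions differing by
at most two. In a tree every path is a geodesic.
-/

section ClosedNbhd

variable {V : Type*} {G : SimpleGraph V} {u v : V}

lemma mem_closedNbhd_self (G : SimpleGraph V) (v : V) : v ∈ closedNbhd G v :=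
  Or.inl rfl

lemma mem_closedNbhd_of_adj (h : G.Adj v u) : u ∈ closedNbhd G v :=
  Or.inr h

lemma mem_closedNbhd_comm : u ∈ closedNbhd G v ↔ v ∈ closedNbhd G u :=
  or_congr eq_comm (G.adj_comm v u)

lemma dist_le_dist_add_one_of_mem_closedNbhd (x : V) (h : u ∈ closedNbhd G v) :
    G.dist x u ≤ G.dist x v + 1 := by
  rcases h with rfl | hadj
  · exact Nat.le_succ _
  · have := hadj.diff_dist_adj (u := x)
    omega

end ClosedNbhd

section Leaf

variable {V : Type*} (G : SimpleGraph V)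

/-- The pendant leaves attached to `z`, i.e. the neighbours of `z` of degree one. The degree
condition is expressed without cardinalities, so that it needs no finiteness: `z` is the only
neighbour. -/
def leafNeighborSet (z : V) : Set V :=
  {u | G.neighborSet u = {z}}

variable {G}

lemma adj_of_mem_leafNeighborSet {u z : V} (h : u ∈ leafNeighborSet G z) : G.Adj z u :=
  G.adj_symm (h.symm.subset rfl : z ∈ G.neighborSet u)

lemma leafNeighborSet_subset_closedNbhd (z : V) : leafNeighborSet G z ⊆ closedNbhd G z :=
  fun _ hu => mem_closedNbhd_of_adj (adj_of_mem_leafNeighborSet hu)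

lemma leafNeighborSet_eq_coe_filter [G.LocallyFinite] (z : V) :
    leafNeighborSet G z = ↑{u ∈ G.neighborFinset z | G.degree u = 1} := by
  ext u
  simp only [leafNeighborSet, Set.mem_ofPred_eq, Finset.coe_filter, mem_neighborFinset,
    degree_eq_one_iff_existsUnique_adj, Set.eq_singleton_iff_unique_mem, mem_neighborSet]
  constructor
  · rintro ⟨hadj, hunique⟩
    exact ⟨hadj.symm, z, hadj, hunique⟩
  · rintro ⟨hadj, hexists⟩
    exact ⟨hadj.symm, fun t ht => hexists.unique ht hadj.symm⟩

end Leaf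

namespace IsSubsetSquareColouring

variable {V : Type*} {G : SimpleGraph V} {q : ℕ} {c : V → ℕ}

lemma encard_le_of_forall_ne_zero (hc : IsSubsetSquareColouring G q c) {v : V} {S : Set V}
    (hSv : S ⊆ closedNbhd G v) (hS : ∀ u ∈ S, c u ≠ 0) : S.encard ≤ q := by
  obtain ⟨hle, -, hinj⟩ := hc
  have hmaps : Set.MapsTo c S (Finset.Icc 1 q) := fun u hu =>
    Finset.mem_coe.2 (Finset.mem_Icc.2 ⟨Nat.one_le_iff_ne_zero.2 (hS u hu), hle u⟩)
  have hinjOn : Set.InjOn c S := fun a ha b hb hab =>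
    hinj v (c a) (Nat.one_le_iff_ne_zero.2 (hS a ha)) (hle a) a (hSv ha) b (hSv hb) rfl hab.symm
  calc S.encard ≤ (Finset.Icc 1 q : Set ℕ).encard := Set.encard_le_encard_of_injOn hmaps hinjOn
    _ = q := by rw [Set.encard_coe_eq_coe_finsetCard, Nat.card_Icc, Nat.add_sub_cancel]

lemma ne_zero_of_mem_leafNeighborSet (hc : IsSubsetSquareColouring G q c) {u z : V}
    (hz : c z = 0) (hu : u ∈ leafNeighborSet G z) : c u ≠ 0 := by
  obtain ⟨t, rfl | hadj, ht⟩ := hc.2.1 u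
  · exact ht
  · obtain rfl : t = z := hu.subset hadj
    exact absurd hz ht

lemma encard_leafNeighborSet_le (hc : IsSubsetSquareColouring G q c) {z : V} (hz : c z = 0) :
    (leafNeighborSet G z).encard ≤ q :=
  hc.encard_le_of_forall_ne_zero (leafNeighborSet_subset_closedNbhd z)
    fun _ => hc.ne_zero_of_mem_leafNeighborSet hz

lemma encard_le_of_encard_le_leafNeighborSet (hc : IsSubsetSquareColouring G q c) {v : V}
    {S : Set V} (hSv : S ⊆ closedNbhd G v)
    (hleaf : ∀ z ∈ S, S.encard ≤ (leafNeighborSet G z).encard) : S.encard ≤ q := by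
  by_cases hS : ∀ z ∈ S, c z ≠ 0
  · exact hc.encard_le_of_forall_ne_zero hSv hS
  · push Not at hS
    obtain ⟨z, hzS, hz⟩ := hS
    exact (hleaf z hzS).trans (hc.encard_leafNeighborSet_le hz)

lemma three_le_of_isPath (hc : IsSubsetSquareColouring G q c) {x y : V} {w : G.Walk x y}
    (hw : w.IsPath) (hk : 2 ≤ w.length)
    (hleaf : ∀ z ∈ w.support, 3 ≤ (leafNeighborSet G z).encard) : 3 ≤ q := by
  have hne {i j : ℕ} (hi : i ≤ 2) (hj : j ≤ 2) (hij : i ≠ j) : w.getVert i ≠ w.getVert j :=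
    fun h => hij (hw.getVert_injOn (hi.trans hk) (hj.trans hk) h)
  let S : Set V := {w.getVert 0, w.getVert 1, w.getVert 2}
  have hcard : S.encard = 3 := Set.encard_eq_three.2
    ⟨_, _, _, hne (by simp) (by simp) (by simp), hne (by simp) (by simp) (by simp),
      hne (by simp) (by simp) (by simp), rfl⟩
  have hS : S ⊆ closedNbhd G (w.getVert 1) := by
    rintro u (rfl | rfl | rfl)
    · exact mem_closedNbhd_of_adj (w.adj_getVert_succ (i := 0) (by omega)).symm
    · exact mem_closedNbhd_self G _
    · exact mem_closedNbhd_of_adj (w.adj_getVert_succ (i := 1) (by omega))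
  have hle : S.encard ≤ q := by
    refine hc.encard_le_of_encard_le_leafNeighborSet hS fun z hz => ?_
    rw [hcard]
    rcases hz with rfl | rfl | rfl <;> exact hleaf _ (w.getVert_mem_support _)
  rw [hcard] at hle
  exact_mod_cast hle

end IsSubsetSquareColouring

section Geodesic

variable {V : Type*} {G : SimpleGraph V} {x y : V} {w : G.Walk x y}

lemma length_eq_dist_of_isAcyclic_of_isPath (hG : G.IsAcyclic) (hw : w.IsPath) :
    w.length = G.dist x y := by
  obtain ⟨p, hp, hlength⟩ := w.reachable.exists_path_of_dist
  have hpw : p = w := congrArg Subtype.val ((hG.subsingleton_path x y).elim ⟨p, hp⟩ ⟨w, hw⟩)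
  rw [← hlength, hpw]

lemma dist_getVert_of_length_eq_dist (hw : w.length = G.dist x y) {i : ℕ} (hi : i ≤ w.length) :
    G.dist x (w.getVert i) = i := by
  rw [← length_eq_dist_of_subwalk hw (w.isSubwalk_take i), Walk.take_length, min_eq_left hi]

lemma eq_of_dist_eq_of_length_eq_dist (hw : w.length = G.dist x y) {a b : V}
    (ha : a ∈ w.support) (hb : b ∈ w.support) (hab : G.dist x a = G.dist x b) : a = b := by
  obtain ⟨i, rfl, hi⟩ := Walk.mem_support_iff_exists_getVert.1 ha
  obtain ⟨j, rfl, hj⟩ := Walk.mem_support_iff_exists_getVert.1 hb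
  rw [dist_getVert_of_length_eq_dist hw hi, dist_getVert_of_length_eq_dist hw hj] at hab
  rw [hab]

open Classical in
/-- The colouring of a walk by `1, 2, 3, 1, 2, 3, …`, all other vertices being uncoloured. Positions
are measured by the distance to the start of the walk, which is the index along the walk when the
walk is a geodesic. -/
noncomputable def periodicColouring (w : G.Walk x y) (v : V) : ℕ :=
  if v ∈ w.support then G.dist x v % 3 + 1 else 0

lemma periodicColouring_of_mem {v : V} (hv : v ∈ w.support) :
    periodicColouring w v = G.dist x v % 3 + 1 :=
  if_pos hv

lemma periodicColouring_ne_zero_iff {v : V} : periodicColouring w v ≠ 0 ↔ v ∈ w.support := by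
  simp [periodicColouring]

lemma periodicColouring_le_three (w : G.Walk x y) (v : V) : periodicColouring w v ≤ 3 := by
  unfold periodicColouring
  split_ifs <;> omega

lemma periodicColouring_injOn_closedNbhd (hw : w.length = G.dist x y) (v : V) :
    Set.InjOn (periodicColouring w) ({u | u ∈ w.support} ∩ closedNbhd G v) := by
  rintro a ⟨ha, hav⟩ b ⟨hb, hbv⟩ hab
  rw [periodicColouring_of_mem ha, periodicColouring_of_mem hb] at hab
  have hav_le := dist_le_dist_add_one_of_mem_closedNbhd x hav
  have hva_le := dist_le_dist_add_one_of_mem_closedNbhd x (mem_closedNbhd_comm.1 hav)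
  have hbv_le := dist_le_dist_add_one_of_mem_closedNbhd x hbv
  have hvb_le := dist_le_dist_add_one_of_mem_closedNbhd x (mem_closedNbhd_comm.1 hbv)
  exact eq_of_dist_eq_of_length_eq_dist hw ha hb (by omega)

lemma isSubsetSquareColouring_periodicColouring (hw : w.length = G.dist x y)
    (hdom : ∀ u, ∃ z ∈ w.support, z ∈ closedNbhd G u) :
    IsSubsetSquareColouring G 3 (periodicColouring w) := by
  refine ⟨periodicColouring_le_three w, fun v => ?_, fun v i hi _ a hav b hbv hca hcb => ?_⟩
  · obtain ⟨z, hz, hzv⟩ := hdom v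
    exact ⟨z, hzv, periodicColouring_ne_zero_iff.2 hz⟩
  · have ha : a ∈ w.support := periodicColouring_ne_zero_iff.1 (by omega)
    have hb : b ∈ w.support := periodicColouring_ne_zero_iff.1 (by omega)
    exact periodicColouring_injOn_closedNbhd hw v ⟨ha, hav⟩ ⟨hb, hbv⟩ (hca.trans hcb.symm)

end Geodesic

theorem stmt11_general {V : Type*} {G : SimpleGraph V} {x y : V} {w : G.Walk x y}
    (hw : w.length = G.dist x y) (hk : 2 ≤ w.length)
    (hdom : ∀ u, ∃ z ∈ w.support, z ∈ closedNbhd G u)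
    (hleaf : ∀ z ∈ w.support, 3 ≤ (leafNeighborSet G z).encard) :
    sscNum G = 3 := by
  have hleast : IsLeast {q | ∃ c : V → ℕ, IsSubsetSquareColouring G q c} 3 :=
    ⟨⟨_, isSubsetSquareColouring_periodicColouring hw hdom⟩,
      fun _ ⟨_, hc⟩ => hc.three_le_of_isPath (w.isPath_of_length_eq_dist hw) hk hleaf⟩
  exact hleast.csInf_eq

theorem stmt11 {V : Type*} [Fintype V] [DecidableEq V] (G : SimpleGraph V)
    [DecidableRel G.Adj]
    (hconn : G.Connected) (hacyc : G.IsAcyclic)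
    {x y : V} (w : G.Walk x y) (hw : w.IsPath) (hk : 2 ≤ w.length)
    (hcov : ∀ u : V, u ∈ w.support ∨
      (G.degree u = 1 ∧ ∃ z ∈ w.support, G.Adj z u))
    (hleaf : ∀ z ∈ w.support,
      3 ≤ ((G.neighborFinset z).filter (fun u => G.degree u = 1)).card) :
    sscNum G = 3 := by
  have hdom (u : V) : ∃ z ∈ w.support, z ∈ closedNbhd G u :=
    (hcov u).elim (fun hu => ⟨u, hu, mem_closedNbhd_self G u⟩)
      fun ⟨_, z, hz, hzu⟩ => ⟨z, hz, mem_closedNbhd_of_adj hzu.symm⟩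
  exact stmt11_general (length_eq_dist_of_isAcyclic_of_isPath hacyc hw) hk hdom fun z hz => by
    rw [leafNeighborSet_eq_coe_filter, Set.encard_coe_eq_coe_finsetCard]
    exact_mod_cast hleaf z hz
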